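/- Under the standing hypotheses with g(ν) = α·ν + 1 for some α ∈ ℕ, as x → ∞, M(x) = (√(log x)/log₂ x)·( C_g/√(κ/α) + O(log₃ x / log₂ x) ). -/

import Mathlib

open Filter

/-!
Write `w a = log (g (a + 1) / g a)` and `L = log log x`. If `f n = ∏ q_j ^ v_j` up to primes
outside `Q`, then `log f (f n) = ∑_j ∑_{a < v_j} w a = ∑_a w a * r a`, where `r a` counts the `j`
with `v_j > a`. A factor `q_j` of `f n` must divide `g e = α e + 1` for the exponent `e` in `n` of
some prime, so that it costs an exponent of about `q_j / α ≈ κ j (L / 2) / α`. Up to primes below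
`√(log x) / L ^ 3`, which contribute little, the primes carrying these exponents have logarithm
about `L / 2`. Hence `log n` is about `(κ / α) (L / 2)² ∑_j j v_j`, and `∑_j j v_j ≥ ∑_a (r a)² / 2`
because the layer at height `a` consists of `r a` distinct indices.
By Cauchy–Schwarz, `∑ w a * r a` subject to `(κ / α) (L / 2)² ∑ (r a)² / 2 ≤ log x` is at most
`(√(log x) / L) √(8 (∑ (w a)²) α / κ)`, and the staircase `r a = ⌊ρ w a⌋` attains this up to a
relative error `O(log L / L)`.
-/

section Weights

open Finset Real

/-- The increment `log g(a+1) - log g(a)` of the logarithm of an arithmetic weight `g`. -/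
noncomputable def logIncrement (g : ℕ → ℕ) (a : ℕ) : ℝ := log ((g (a + 1) : ℝ) / (g a : ℝ))

lemma logIncrement_nonneg {g : ℕ → ℕ} (hg : Monotone g) (a : ℕ) : 0 ≤ logIncrement g a := by
  rcases (g a).eq_zero_or_pos with h | h
  · simp [logIncrement, h]
  · exact log_nonneg ((one_le_div (by exact_mod_cast h)).2 (by exact_mod_cast hg a.le_succ))

lemma sum_range_logIncrement {g : ℕ → ℕ} (hg0 : g 0 = 1) (hg : ∀ a, g a ≠ 0) (v : ℕ) :
    ∑ a ∈ range v, logIncrement g a = log (g v) := by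
  have hstep (a : ℕ) : logIncrement g a = log (g (a + 1)) - log (g a) :=
    log_div (by exact_mod_cast hg _) (by exact_mod_cast hg _)
  simp only [hstep, sum_range_sub (fun a ↦ log (g a : ℝ)), hg0, Nat.cast_one, log_one, sub_zero]

lemma sum_range_sq_le_of_le_div {w : ℕ → ℝ} {K : ℝ} (hw0 : ∀ a, 0 ≤ w a)
    (hw : ∀ a : ℕ, w a ≤ K / (a + 1)) {A : ℕ} (hA : A ≠ 0) (N : ℕ) :
    ∑ a ∈ range N, w a ^ 2 ≤ ∑ a ∈ range A, w a ^ 2 + K ^ 2 / A := by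
  have hterm (a : ℕ) : w a ^ 2 ≤ K ^ 2 * (((a + 1 : ℕ) : ℝ) ^ 2)⁻¹ := by
    rw [← div_eq_mul_inv, ← div_pow]
    exact pow_le_pow_left₀ (hw0 a) (by simpa using hw a) 2
  calc ∑ a ∈ range N, w a ^ 2
      ≤ ∑ a ∈ range (A + N), w a ^ 2 :=
        sum_le_sum_of_subset_of_nonneg (range_mono (by omega)) fun _ _ _ ↦ by positivity
    _ = ∑ a ∈ range A, w a ^ 2 + ∑ a ∈ Ico A (A + N), w a ^ 2 :=
        (sum_range_add_sum_Ico _ (by omega)).symm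
    _ ≤ ∑ a ∈ range A, w a ^ 2 + ∑ a ∈ Ico A (A + N), K ^ 2 * (((a + 1 : ℕ) : ℝ) ^ 2)⁻¹ := by
        gcongr with a
        exact hterm a
    _ = ∑ a ∈ range A, w a ^ 2 + K ^ 2 * ∑ i ∈ Ioc A (A + N), ((i : ℝ) ^ 2)⁻¹ := by
        rw [← mul_sum, sum_Ico_add' (fun i : ℕ ↦ ((i : ℝ) ^ 2)⁻¹) A (A + N) 1,
          Ico_add_one_add_one_eq_Ioc]
    _ ≤ ∑ a ∈ range A, w a ^ 2 + K ^ 2 * (A : ℝ)⁻¹ := by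
        gcongr
        exact (sum_Ioc_inv_sq_le_sub hA (by omega)).trans (sub_le_self _ (by positivity))
    _ = ∑ a ∈ range A, w a ^ 2 + K ^ 2 / A := by rw [div_eq_mul_inv]

lemma summable_sq_of_le_div {w : ℕ → ℝ} {K : ℝ} (hw0 : ∀ a, 0 ≤ w a)
    (hw : ∀ a : ℕ, w a ≤ K / (a + 1)) : Summable fun a ↦ w a ^ 2 :=
  summable_of_sum_range_le (fun _ ↦ by positivity)
    (sum_range_sq_le_of_le_div hw0 hw one_ne_zero)

lemma tsum_sq_sub_div_le_sum_range {w : ℕ → ℝ} {K : ℝ} (hw0 : ∀ a, 0 ≤ w a)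
    (hw : ∀ a : ℕ, w a ≤ K / (a + 1)) {A : ℕ} (hA : A ≠ 0) :
    ∑' a, w a ^ 2 - K ^ 2 / A ≤ ∑ a ∈ range A, w a ^ 2 :=
  sub_le_iff_le_add.2 <| Real.tsum_le_of_sum_range_le (fun _ ↦ by positivity)
    (sum_range_sq_le_of_le_div hw0 hw hA)

/-- The weight `g(ν) = α·ν + 1` of the theorem. -/
def affine (α ν : ℕ) : ℕ := α * ν + 1

lemma affine_zero (α : ℕ) : affine α 0 = 1 := rfl

lemma affine_ne_zero (α ν : ℕ) : affine α ν ≠ 0 := Nat.succ_ne_zero _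

lemma affine_mono (α : ℕ) : Monotone (affine α) := fun _ _ h ↦
  Nat.succ_le_succ (Nat.mul_le_mul_left α h)

lemma cast_affine (α ν : ℕ) : (affine α ν : ℝ) = α * ν + 1 := by
  rw [affine]; push_cast; rfl

lemma le_div_of_affine_le {α ν : ℕ} (hα : 1 ≤ α) {b : ℝ} (h : (affine α ν : ℝ) ≤ b) :
    (ν : ℝ) ≤ b / α := by
  rw [cast_affine] at h
  rw [le_div_iff₀ (by exact_mod_cast hα)]
  linarith

lemma log_affine_le (α ν : ℕ) : log (affine α ν) ≤ α * ν := by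
  have := log_le_sub_one_of_pos (x := (α : ℝ) * ν + 1) (by positivity)
  rw [cast_affine]
  linarith

lemma log_affine_add_le (α a b : ℕ) :
    log (affine α (a + b)) ≤ log (affine α a) + α * b := by
  have hsub : affine α (a + b) ≤ affine α a * affine α b := by
    unfold affine
    nlinarith [Nat.zero_le (α * a * (α * b))]
  have hne (ν : ℕ) : (affine α ν : ℝ) ≠ 0 := by exact_mod_cast affine_ne_zero α ν
  calc log (affine α (a + b)) ≤ log (affine α a * affine α b) :=
        log_le_log (by exact_mod_cast (affine_ne_zero α _).bot_lt) (by exact_mod_cast hsub)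
    _ = log (affine α a) + log (affine α b) := log_mul (hne a) (hne b)
    _ ≤ log (affine α a) + α * b := by gcongr; exact log_affine_le α b

lemma logIncrement_affine_le {α : ℕ} (hα : 1 ≤ α) (a : ℕ) :
    logIncrement (affine α) a ≤ α / (a + 1) := by
  have hα' : (1 : ℝ) ≤ α := by exact_mod_cast hα
  calc logIncrement (affine α) a
      ≤ (α * (a + 1) + 1) / (α * a + 1) - 1 := by
        simpa [logIncrement, cast_affine] using
          log_le_sub_one_of_pos (x := ((α : ℝ) * (a + 1) + 1) / (α * a + 1)) (by positivity)
    _ = α / (α * a + 1) := by field_simp; ring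
    _ ≤ α / (a + 1) := by
        gcongr
        exact le_mul_of_one_le_left (by positivity) hα'

lemma logIncrement_affine_antitone (α : ℕ) : Antitone (logIncrement (affine α)) := by
  refine antitone_nat_of_succ_le fun a ↦ log_le_log ?_ ?_
  · simp only [cast_affine]; positivity
  · simp only [cast_affine]
    rw [div_le_div_iff₀ (by positivity) (by positivity)]
    push_cast
    nlinarith [sq_nonneg (α : ℝ)]

lemma logIncrement_affine_zero_pos {α : ℕ} (hα : 1 ≤ α) : 0 < logIncrement (affine α) 0 := by
  refine log_pos ?_
  simpa [affine] using (Nat.cast_pos.2 hα : (0 : ℝ) < α)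

/-- The sum `∑ (log (g(a+1)/g(a)))²` for `g(ν) = α·ν + 1`, so that `C_g = √(8 · energy α)`. -/
noncomputable def energy (α : ℕ) : ℝ := ∑' a, logIncrement (affine α) a ^ 2

lemma summable_logIncrement_affine_sq {α : ℕ} (hα : 1 ≤ α) :
    Summable fun a ↦ logIncrement (affine α) a ^ 2 :=
  summable_sq_of_le_div (logIncrement_nonneg (affine_mono α)) (logIncrement_affine_le hα)

lemma sum_range_sq_le_energy {α : ℕ} (hα : 1 ≤ α) (N : ℕ) :
    ∑ a ∈ range N, logIncrement (affine α) a ^ 2 ≤ energy α :=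
  (summable_logIncrement_affine_sq hα).sum_le_tsum _ fun _ _ ↦ by positivity

lemma energy_sub_le_sum_range_sq {α : ℕ} (hα : 1 ≤ α) {N : ℕ} (hN : N ≠ 0) :
    energy α - (α : ℝ) ^ 2 / N ≤ ∑ a ∈ range N, logIncrement (affine α) a ^ 2 :=
  tsum_sq_sub_div_le_sum_range (logIncrement_nonneg (affine_mono α))
    (logIncrement_affine_le hα) hN

lemma energy_pos {α : ℕ} (hα : 1 ≤ α) : 0 < energy α :=
  (summable_logIncrement_affine_sq hα).tsum_pos (fun _ ↦ by positivity) 0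
    (pow_pos (logIncrement_affine_zero_pos hα) 2)

/-- The leading coefficient `C_g / √(κ/α)` of the maximal order. -/
noncomputable def leadingCoeff (α : ℕ) (κ : ℝ) : ℝ := √(8 * energy α) / √(κ / α)

lemma leadingCoeff_pos {α : ℕ} (hα : 1 ≤ α) {κ : ℝ} (hκ : 0 < κ) : 0 < leadingCoeff α κ := by
  have := energy_pos hα
  unfold leadingCoeff
  positivity

lemma leadingCoeff_sq {α : ℕ} (hα : 1 ≤ α) {κ : ℝ} (hκ : 0 < κ) :
    leadingCoeff α κ ^ 2 = 8 * energy α * α / κ := by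
  have := energy_pos hα
  rw [leadingCoeff, div_pow, sq_sqrt (by positivity), sq_sqrt (by positivity)]
  field_simp

end Weights

section Staircases

open Finset Real

lemma sum_mul_sum_range_eq_sum_mul_sum_filter {ι R : Type*} [CommSemiring R] (J : Finset ι)
    (v : ι → ℕ) (d : ι → R) (c : ℕ → R) {N : ℕ} (hN : ∀ j ∈ J, v j ≤ N) :
    ∑ j ∈ J, d j * ∑ a ∈ range (v j), c a = ∑ a ∈ range N, c a * ∑ j ∈ J with a < v j, d j := by
  simp_rw [mul_sum]
  rw [sum_comm' (t' := range N) (s' := fun a ↦ {j ∈ J | a < v j})]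
  · simp only [mul_comm]
  · simp only [mem_range, mem_filter]
    exact fun j a ↦ ⟨fun h ↦ ⟨h, h.2.trans_le (hN j h.1)⟩, And.left⟩

lemma card_sq_le_two_mul_sum (s : Finset ℕ) (hs : ∀ j ∈ s, 1 ≤ j) :
    (#s : ℝ) ^ 2 ≤ 2 * ∑ j ∈ s, (j : ℝ) := by
  induction s using Finset.induction_on_max with
  | empty => simp
  | insert a s hlt ih =>
    have ha : a ∉ s := fun h ↦ lt_irrefl _ (hlt a h)
    have hcard : (#s : ℝ) + 1 ≤ a := by
      have hsub : s ⊆ Ico 1 a := fun j hj ↦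
        mem_Ico.2 ⟨hs j (mem_insert_of_mem hj), hlt j hj⟩
      have := card_le_card hsub
      rw [Nat.card_Ico] at this
      have ha1 := hs a (mem_insert_self a s)
      exact_mod_cast (by omega : #s + 1 ≤ a)
    rw [card_insert_of_notMem ha, sum_insert ha]
    push_cast
    nlinarith [ih fun j hj ↦ hs j (mem_insert_of_mem hj)]

-- Layer the sum by height: the layer at height `a` has `k_a` elements, hence index sum at least
-- `k_a² / 2`, and Cauchy–Schwarz bounds `∑ w a * k_a`.
lemma sum_sum_range_le_sqrt {ι : Type*} {w : ℕ → ℝ} (hw : Summable fun a ↦ w a ^ 2)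
    (J : Finset ι) {idx v : ι → ℕ} (hinj : Set.InjOn idx J) (hidx : ∀ j ∈ J, 1 ≤ idx j)
    {B : ℝ} (hB : ∑ j ∈ J, (v j : ℝ) * idx j ≤ B) :
    ∑ j ∈ J, ∑ a ∈ range (v j), w a ≤ √(2 * (∑' a, w a ^ 2) * B) := by
  set N := J.sup v
  have hN : ∀ j ∈ J, v j ≤ N := fun j hj ↦ le_sup hj
  let layer (a : ℕ) : Finset ι := {j ∈ J | a < v j}
  have hvalue : ∑ j ∈ J, ∑ a ∈ range (v j), w a = ∑ a ∈ range N, w a * (#(layer a) : ℝ) := by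
    simpa using sum_mul_sum_range_eq_sum_mul_sum_filter J v (fun _ ↦ (1 : ℝ)) w hN
  have hcost : ∑ j ∈ J, (v j : ℝ) * idx j = ∑ a ∈ range N, ∑ j ∈ layer a, (idx j : ℝ) := by
    simpa [mul_comm] using
      sum_mul_sum_range_eq_sum_mul_sum_filter J v (fun j ↦ (idx j : ℝ)) (fun _ ↦ 1) hN
  have hlayer (a : ℕ) : (#(layer a) : ℝ) ^ 2 ≤ 2 * ∑ j ∈ layer a, (idx j : ℝ) := by
    have hinj' : Set.InjOn idx (layer a) := hinj.mono (coe_subset.2 (filter_subset _ _))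
    have := card_sq_le_two_mul_sum ((layer a).image idx)
      (forall_mem_image.2 fun j hj ↦ hidx j (mem_filter.1 hj).1)
    rwa [card_image_of_injOn hinj', sum_image hinj'] at this
  have hsq : ∑ a ∈ range N, (#(layer a) : ℝ) ^ 2 ≤ 2 * B := by
    calc ∑ a ∈ range N, (#(layer a) : ℝ) ^ 2
        ≤ 2 * ∑ j ∈ J, (v j : ℝ) * idx j := by
          rw [hcost, mul_sum]
          exact sum_le_sum fun a _ ↦ hlayer a
      _ ≤ 2 * B := by gcongr
  have htsum : 0 ≤ ∑' a, w a ^ 2 := tsum_nonneg fun a ↦ sq_nonneg (w a)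
  have hpartial : ∑ a ∈ range N, w a ^ 2 ≤ ∑' a, w a ^ 2 :=
    hw.sum_le_tsum _ fun a _ ↦ sq_nonneg (w a)
  rw [hvalue]
  refine le_sqrt_of_sq_le ?_
  calc (∑ a ∈ range N, w a * (#(layer a) : ℝ)) ^ 2
      ≤ (∑ a ∈ range N, w a ^ 2) * ∑ a ∈ range N, (#(layer a) : ℝ) ^ 2 :=
        sum_mul_sq_le_sq_mul_sq _ _ _
    _ ≤ (∑' a, w a ^ 2) * (2 * B) :=
        mul_le_mul hpartial hsq (sum_nonneg fun _ _ ↦ sq_nonneg _) htsum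
    _ = 2 * (∑' a, w a ^ 2) * B := by ring

end Staircases

section MultiplicativeExtensions

open Finset Real

/-- The function `f` of the theorem: it is multiplicative, takes the value `g ν` at the `ν`-th power
of a prime in `Q`, and a value in `{0, 1}` at the powers of the other primes. The convention
`f 0 = 1` covers the arguments `n` of `f (f n)` with `f n = 0`. -/
structure IsMultiplicativeExtension (f g : ℕ → ℕ) (Q : Set ℕ) : Prop where
  map_zero : f 0 = 1
  map_one : f 1 = 1
  map_mul_of_coprime : ∀ m n : ℕ, m.Coprime n → f (m * n) = f m * f n
  map_pow_of_mem : ∀ p ν : ℕ, p.Prime → p ∈ Q → 1 ≤ ν → f (p ^ ν) = g ν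
  map_pow_of_notMem : ∀ p ν : ℕ, p.Prime → p ∉ Q → 1 ≤ ν → f (p ^ ν) = 0 ∨ f (p ^ ν) = 1

open scoped Classical in
/-- The prime factors of `n` that belong to `Q`. -/
noncomputable def primeFactorsIn (Q : Set ℕ) (n : ℕ) : Finset ℕ := {p ∈ n.primeFactors | p ∈ Q}

namespace IsMultiplicativeExtension

variable {f g : ℕ → ℕ} {Q : Set ℕ}

lemma apply_eq_prod (hf : IsMultiplicativeExtension f g Q) {n : ℕ} (hfn : f n ≠ 0) :
    f n = ∏ p ∈ primeFactorsIn Q n, g (n.factorization p) := by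
  have hprod : f n = ∏ p ∈ n.primeFactors, f (p ^ n.factorization p) :=
    Nat.multiplicative_factorization' f hf.map_mul_of_coprime hf.map_zero hf.map_one
  have hfactor : ∀ p ∈ n.primeFactors, f (p ^ n.factorization p) ≠ 0 := by
    rwa [hprod, prod_ne_zero_iff] at hfn
  rw [hprod, primeFactorsIn, prod_filter]
  refine prod_congr rfl fun p hp ↦ ?_
  have hpp := Nat.prime_of_mem_primeFactors hp
  have hν : 1 ≤ n.factorization p :=
    hpp.factorization_pos_of_dvd (Nat.mem_primeFactors.1 hp).2.2 (Nat.dvd_of_mem_primeFactors hp)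
  split_ifs with hQ
  · exact hf.map_pow_of_mem p _ hpp hQ hν
  · exact (hf.map_pow_of_notMem p _ hpp hQ hν).resolve_left (hfactor p hp)

lemma log_apply_le (hf : IsMultiplicativeExtension f g Q) (hg : ∀ ν, g ν ≠ 0) (n : ℕ) :
    log (f n) ≤ ∑ p ∈ primeFactorsIn Q n, log (g (n.factorization p)) := by
  rcases eq_or_ne (f n) 0 with hfn | hfn
  · rw [hfn, Nat.cast_zero, log_zero]
    exact sum_nonneg fun _ _ ↦ log_natCast_nonneg _
  · rw [hf.apply_eq_prod hfn, Nat.cast_prod, log_prod fun p _ ↦ by exact_mod_cast hg _]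

lemma apply_prime_pow (hf : IsMultiplicativeExtension f g Q) (hg0 : g 0 = 1) {p : ℕ}
    (hp : p.Prime) (hpQ : p ∈ Q) (ν : ℕ) : f (p ^ ν) = g ν := by
  rcases ν.eq_zero_or_pos with rfl | hν
  · rw [pow_zero, hf.map_one, hg0]
  · exact hf.map_pow_of_mem p ν hp hpQ hν

lemma apply_prod_prime_pow (hf : IsMultiplicativeExtension f g Q) (hg0 : g 0 = 1) {ι : Type*}
    {s : Finset ι} {p : ι → ℕ} (hp : ∀ i ∈ s, (p i).Prime) (hpQ : ∀ i ∈ s, p i ∈ Q)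
    (hinj : Set.InjOn p s) (e : ι → ℕ) :
    f (∏ i ∈ s, p i ^ e i) = ∏ i ∈ s, g (e i) := by
  classical
  induction s using Finset.induction_on with
  | empty => simpa using hf.map_one
  | insert i s hi ih =>
    have hcoprime : (p i ^ e i).Coprime (∏ k ∈ s, p k ^ e k) := by
      refine Nat.Coprime.prod_right fun k hk ↦ Nat.Coprime.pow _ _ ?_
      refine (Nat.coprime_primes (hp i (mem_insert_self i s)) (hp k (mem_insert_of_mem hk))).2 ?_
      exact fun h ↦ hi (hinj (mem_insert_self i s) (mem_insert_of_mem hk) h ▸ hk)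
    rw [prod_insert hi, prod_insert hi, hf.map_mul_of_coprime _ _ hcoprime,
      hf.apply_prime_pow hg0 (hp i (mem_insert_self i s)) (hpQ i (mem_insert_self i s)),
      ih (fun k hk ↦ hp k (mem_insert_of_mem hk)) (fun k hk ↦ hpQ k (mem_insert_of_mem hk))
        (hinj.mono (coe_subset.2 (subset_insert i s)))]

end IsMultiplicativeExtension

end MultiplicativeExtensions

section Factorizations

open Finset Real

lemma sum_factorization_mul_le {c : ℕ → ℝ} (hc : ∀ p : ℕ, p.Prime → 0 ≤ c p) (m : ℕ)
    (s : Finset ℕ) :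
    ∑ p ∈ s, (m.factorization p : ℝ) * c p ≤ m.factorization.sum fun p k ↦ (k : ℝ) * c p := by
  have hnonneg (p : ℕ) : 0 ≤ (m.factorization p : ℝ) * c p := by
    by_cases hp : p.Prime
    · exact mul_nonneg (Nat.cast_nonneg _) (hc p hp)
    · simp [Nat.factorization_eq_zero_of_not_prime m hp]
  rw [Finsupp.sum_of_support_subset _ (subset_union_right (s₁ := s)) _ (by simp)]
  exact sum_le_sum_of_subset_of_nonneg subset_union_left fun p _ _ ↦ hnonneg p

lemma sum_factorization_mul_log_le (m : ℕ) (s : Finset ℕ) :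
    ∑ p ∈ s, (m.factorization p : ℝ) * log p ≤ log m :=
  (sum_factorization_mul_le (fun p _ ↦ log_natCast_nonneg p) m s).trans_eq
    (log_nat_eq_sum_factorization m).symm

lemma sum_factorization_le_two_mul_log (m : ℕ) (s : Finset ℕ) :
    ∑ p ∈ s, (m.factorization p : ℝ) ≤ 2 * log m := by
  have hterm (p : ℕ) : (m.factorization p : ℝ) ≤ 2 * (m.factorization p * log p) := by
    by_cases hp : p.Prime
    · have hlog : log 2 ≤ log p := log_le_log two_pos (by exact_mod_cast hp.two_le)
      nlinarith [log_two_gt_d9, Nat.cast_nonneg (α := ℝ) (m.factorization p)]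
    · simp [Nat.factorization_eq_zero_of_not_prime m hp]
  calc ∑ p ∈ s, (m.factorization p : ℝ)
      ≤ 2 * ∑ p ∈ s, (m.factorization p : ℝ) * log p := by
        rw [mul_sum]
        exact sum_le_sum fun p _ ↦ hterm p
    _ ≤ 2 * log m := by gcongr; exact sum_factorization_mul_log_le m s

lemma factorization_le_two_mul_log (m p : ℕ) : (m.factorization p : ℝ) ≤ 2 * log m := by
  simpa using sum_factorization_le_two_mul_log m {p}

/-- The completely additive function with value `p - 1` at every prime `p`. -/
noncomputable def sumPrimeFactorsPred (m : ℕ) : ℝ :=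
  m.factorization.sum fun p k ↦ (k : ℝ) * ((p : ℝ) - 1)

lemma sumPrimeFactorsPred_mul {m n : ℕ} (hm : m ≠ 0) (hn : n ≠ 0) :
    sumPrimeFactorsPred (m * n) = sumPrimeFactorsPred m + sumPrimeFactorsPred n := by
  unfold sumPrimeFactorsPred
  rw [Nat.factorization_mul hm hn]
  exact Finsupp.sum_add_index' (fun p ↦ by simp) fun p k l ↦ by push_cast; ring

lemma sumPrimeFactorsPred_one : sumPrimeFactorsPred 1 = 0 := by simp [sumPrimeFactorsPred]

lemma sumPrimeFactorsPred_le_sub_one {m : ℕ} (hm : m ≠ 0) : sumPrimeFactorsPred m ≤ m - 1 := by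
  induction m using Nat.recOnMul with
  | zero => exact absurd rfl hm
  | one => simp [sumPrimeFactorsPred_one]
  | prime p hp => simp [sumPrimeFactorsPred, hp.factorization]
  | mul a b iha ihb =>
    have ha : a ≠ 0 := left_ne_zero_of_mul hm
    have hb : b ≠ 0 := right_ne_zero_of_mul hm
    have ha1 : (1 : ℝ) ≤ a := by exact_mod_cast Nat.one_le_iff_ne_zero.2 ha
    have hb1 : (1 : ℝ) ≤ b := by exact_mod_cast Nat.one_le_iff_ne_zero.2 hb
    rw [sumPrimeFactorsPred_mul ha hb]
    push_cast
    nlinarith [iha ha, ihb hb]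

lemma sumPrimeFactorsPred_prod_le {ι : Type*} (s : Finset ι) {b : ι → ℕ} (hb : ∀ i, b i ≠ 0) :
    sumPrimeFactorsPred (∏ i ∈ s, b i) ≤ ∑ i ∈ s, ((b i : ℝ) - 1) := by
  classical
  induction s using Finset.induction_on with
  | empty => simp [sumPrimeFactorsPred_one]
  | insert i s hi ih =>
    rw [prod_insert hi, sum_insert hi,
      sumPrimeFactorsPred_mul (hb i) (prod_ne_zero_iff.2 fun k _ ↦ hb k)]
    exact add_le_add (sumPrimeFactorsPred_le_sub_one (hb i)) ih

lemma card_le_of_forall_le {s : Finset ℕ} {Y : ℝ} (hY : 0 ≤ Y) (hs0 : 0 ∉ s)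
    (hsY : ∀ p ∈ s, (p : ℝ) ≤ Y) : (#s : ℝ) ≤ Y := by
  have hsub : s ⊆ Icc 1 ⌊Y⌋₊ := fun p hp ↦
    mem_Icc.2 ⟨Nat.one_le_iff_ne_zero.2 (ne_of_mem_of_not_mem hp hs0), Nat.le_floor (hsY p hp)⟩
  calc (#s : ℝ) ≤ #(Icc 1 ⌊Y⌋₊) := by exact_mod_cast card_le_card hsub
    _ = ⌊Y⌋₊ := by simp
    _ ≤ Y := Nat.floor_le hY

lemma sum_log_affine_factorization_le (α m : ℕ) {s : Finset ℕ} {Y : ℝ} (hY : 0 ≤ Y) (hs0 : 0 ∉ s)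
    (hsY : ∀ p ∈ s, (p : ℝ) ≤ Y) :
    ∑ p ∈ s, log (affine α (m.factorization p)) ≤ Y * log (2 * α * log m + 1) := by
  have hterm (p : ℕ) : log (affine α (m.factorization p)) ≤ log (2 * α * log m + 1) := by
    rw [cast_affine, mul_comm (2 : ℝ), mul_assoc]
    gcongr
    exact factorization_le_two_mul_log m p
  calc ∑ p ∈ s, log (affine α (m.factorization p))
      ≤ #s * log (2 * α * log m + 1) := by
        simpa using sum_le_card_nsmul s _ _ fun p _ ↦ hterm p
    _ ≤ Y * log (2 * α * log m + 1) := by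
        gcongr
        · exact log_nonneg (le_add_of_nonneg_left (by positivity))
        · exact card_le_of_forall_le hY hs0 hsY

lemma sum_log_affine_factorization_le_sqrt {α : ℕ} (hα : 1 ≤ α) (m : ℕ) {q : ℕ → ℕ} {K : ℝ}
    (hK : 0 < K) {s : Finset ℕ} (hs : ∀ p ∈ s, ∃ j, 1 ≤ j ∧ q j = p ∧ K * j ≤ (p : ℝ) - 1) :
    ∑ p ∈ s, log (affine α (m.factorization p)) ≤
      √(2 * energy α * (sumPrimeFactorsPred m / K)) := by
  choose! idx hidx hq hcost using hs
  have hinj : Set.InjOn idx s := fun p hp p' hp' h ↦ by rw [← hq p hp, ← hq p' hp', h]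
  have hbudget : ∑ p ∈ s, (m.factorization p : ℝ) * idx p ≤ sumPrimeFactorsPred m / K := by
    rw [le_div_iff₀ hK, sum_mul]
    calc ∑ p ∈ s, (m.factorization p : ℝ) * idx p * K
        ≤ ∑ p ∈ s, (m.factorization p : ℝ) * ((p : ℝ) - 1) := by
          refine sum_le_sum fun p hp ↦ ?_
          rw [mul_assoc, mul_comm (idx p : ℝ)]
          gcongr
          exact hcost p hp
      _ ≤ sumPrimeFactorsPred m := sum_factorization_mul_le
          (fun p hp ↦ sub_nonneg.2 (by exact_mod_cast hp.one_lt.le)) m s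
  simpa only [energy, sum_range_logIncrement (affine_zero α) (affine_ne_zero α)] using
    sum_sum_range_le_sqrt (summable_logIncrement_affine_sq hα) s hinj hidx hbudget

end Factorizations

section IterateUpperBound

open Finset Real

lemma prime_and_mem_of_mem_primeFactorsIn {Q : Set ℕ} {n p : ℕ} (hp : p ∈ primeFactorsIn Q n) :
    p.Prime ∧ p ∈ Q := by
  classical
  have := mem_filter.1 hp
  exact ⟨Nat.prime_of_mem_primeFactors this.1, this.2⟩

namespace IsMultiplicativeExtension

variable {f : ℕ → ℕ} {α : ℕ}

lemma log_apply_le_two_mul_log {Q : Set ℕ} (hf : IsMultiplicativeExtension f (affine α) Q)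
    (n : ℕ) : log (f n) ≤ 2 * α * log n := by
  calc log (f n) ≤ ∑ p ∈ primeFactorsIn Q n, log (affine α (n.factorization p)) :=
        hf.log_apply_le (affine_ne_zero α) n
    _ ≤ α * ∑ p ∈ primeFactorsIn Q n, (n.factorization p : ℝ) := by
        rw [mul_sum]
        exact sum_le_sum fun p _ ↦ log_affine_le α _
    _ ≤ α * (2 * log n) := by gcongr; exact sum_factorization_le_two_mul_log n _
    _ = 2 * α * log n := by ring

lemma exists_apply_eq_mul {Q : Set ℕ} (hf : IsMultiplicativeExtension f (affine α) Q) {n : ℕ}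
    (hfn : f n ≠ 0) {Y : ℝ} (hY : 1 ≤ Y) :
    ∃ m₁ m₂, m₁ ≠ 0 ∧ m₂ ≠ 0 ∧ f n = m₁ * m₂ ∧ log m₁ ≤ Y * log (2 * α * log n + 1) ∧
      sumPrimeFactorsPred m₂ * log Y ≤ α * log n := by
  set small : Finset ℕ := {p ∈ primeFactorsIn Q n | (p : ℝ) ≤ Y} with hsmall
  set large : Finset ℕ := {p ∈ primeFactorsIn Q n | ¬(p : ℝ) ≤ Y} with hlarge
  have hsmall0 : 0 ∉ small := fun h ↦
    (prime_and_mem_of_mem_primeFactorsIn (mem_filter.1 h).1).1.ne_zero rfl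
  refine ⟨∏ p ∈ small, affine α (n.factorization p), ∏ p ∈ large, affine α (n.factorization p),
    prod_ne_zero_iff.2 fun _ _ ↦ affine_ne_zero α _,
    prod_ne_zero_iff.2 fun _ _ ↦ affine_ne_zero α _, ?_, ?_, ?_⟩
  · rw [hf.apply_eq_prod hfn, hsmall, hlarge, prod_filter_mul_prod_filter_not]
  · rw [Nat.cast_prod, log_prod fun _ _ ↦ by exact_mod_cast affine_ne_zero α _]
    exact sum_log_affine_factorization_le α n (by linarith) hsmall0 fun p hp ↦ (mem_filter.1 hp).2
  · have hpred := sumPrimeFactorsPred_prod_le large fun p ↦ affine_ne_zero α (n.factorization p)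
    simp only [cast_affine, add_sub_cancel_right] at hpred
    calc sumPrimeFactorsPred (∏ p ∈ large, affine α (n.factorization p)) * log Y
        ≤ (∑ p ∈ large, (α : ℝ) * n.factorization p) * log Y :=
          mul_le_mul_of_nonneg_right hpred (log_nonneg hY)
      _ = α * ∑ p ∈ large, (n.factorization p : ℝ) * log Y := by
          rw [← mul_sum, ← sum_mul, mul_assoc]
      _ ≤ α * ∑ p ∈ large, (n.factorization p : ℝ) * log p := by
          gcongr with p hp
          exact (not_le.1 (mem_filter.1 hp).2).le
      _ ≤ α * log n := by gcongr; exact sum_factorization_mul_log_le n large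

variable {q : ℕ → ℕ}

lemma log_apply_mul_le (hf : IsMultiplicativeExtension f (affine α) (q '' Set.Ici 1))
    (hα : 1 ≤ α) {K Y : ℝ} (hK : 0 < K) (hY : 0 ≤ Y)
    (hq : ∀ j, 1 ≤ j → Y < q j → K * j ≤ (q j : ℝ) - 1) {m₁ m₂ : ℕ} (hm₁ : m₁ ≠ 0)
    (hm₂ : m₂ ≠ 0) :
    log (f (m₁ * m₂)) ≤ Y * log (2 * α * log ((m₁ * m₂ : ℕ) : ℝ) + 1) + 2 * α * log m₁ +
      √(2 * energy α * (sumPrimeFactorsPred m₂ / K)) := by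
  set P := primeFactorsIn (q '' Set.Ici 1) (m₁ * m₂)
  have hP : ∀ p ∈ P, p.Prime ∧ p ∈ q '' Set.Ici 1 := fun p ↦ prime_and_mem_of_mem_primeFactorsIn
  have hsmall := sum_log_affine_factorization_le α (m₁ * m₂) hY
    (s := {p ∈ P | (p : ℝ) ≤ Y}) (fun h ↦ (hP 0 (mem_filter.1 h).1).1.ne_zero rfl)
    fun p hp ↦ (mem_filter.1 hp).2
  set large : Finset ℕ := {p ∈ P | ¬(p : ℝ) ≤ Y}
  have hidx : ∀ p ∈ large, ∃ j, 1 ≤ j ∧ q j = p ∧ K * j ≤ (p : ℝ) - 1 := by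
    intro p hp
    obtain ⟨hpP, hpY⟩ := mem_filter.1 hp
    obtain ⟨j, hj, rfl⟩ := (hP p hpP).2
    exact ⟨j, hj, rfl, hq j hj (not_le.1 hpY)⟩
  have hlarge : ∑ p ∈ large, log (affine α ((m₁ * m₂).factorization p)) ≤
      √(2 * energy α * (sumPrimeFactorsPred m₂ / K)) + 2 * α * log m₁ := by
    calc ∑ p ∈ large, log (affine α ((m₁ * m₂).factorization p))
        ≤ ∑ p ∈ large, (log (affine α (m₂.factorization p)) + α * m₁.factorization p) := by
          refine sum_le_sum fun p _ ↦ ?_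
          rw [Nat.factorization_mul hm₁ hm₂, add_comm m₁.factorization]
          exact log_affine_add_le α _ _
      _ = ∑ p ∈ large, log (affine α (m₂.factorization p)) +
            α * ∑ p ∈ large, (m₁.factorization p : ℝ) := by rw [sum_add_distrib, mul_sum]
      _ ≤ √(2 * energy α * (sumPrimeFactorsPred m₂ / K)) + α * (2 * log m₁) := by
          gcongr
          · exact sum_log_affine_factorization_le_sqrt hα m₂ hK hidx
          · exact sum_factorization_le_two_mul_log m₁ large
      _ = √(2 * energy α * (sumPrimeFactorsPred m₂ / K)) + 2 * α * log m₁ := by ring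
  calc log (f (m₁ * m₂)) ≤ ∑ p ∈ P, log (affine α ((m₁ * m₂).factorization p)) :=
        hf.log_apply_le (affine_ne_zero α) _
    _ = _ := (sum_filter_add_sum_filter_not P (fun p : ℕ ↦ (p : ℝ) ≤ Y) _).symm
    _ ≤ _ := by linarith

-- Write `f n = m₁ * m₂`, where `m₁` is the contribution of the prime factors of `n` up to `Y`. The
-- factor `m₁` and the primes up to `Y` in `f n` matter little; the others fall under
-- `sum_sum_range_le_sqrt`.
lemma log_iterate_le (hf : IsMultiplicativeExtension f (affine α) (q '' Set.Ici 1))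
    (hα : 1 ≤ α) {K X Y : ℝ} (hK : 0 < K) (hY : 1 < Y)
    (hq : ∀ j, 1 ≤ j → Y < q j → K * j ≤ (q j : ℝ) - 1) {n : ℕ} (hn : log n ≤ X) :
    log (f (f n)) ≤ (1 + 2 * α) * Y * log (4 * α ^ 2 * X + 1) +
      √(2 * energy α * (α * X / (K * log Y))) := by
  have hX : 0 ≤ X := (log_natCast_nonneg n).trans hn
  have hα' : (1 : ℝ) ≤ α := by exact_mod_cast hα
  have hE := energy_pos hα
  have hlogY : 0 < log Y := log_pos hY
  rcases eq_or_ne (f n) 0 with hfn | hfn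
  · have : 0 ≤ log (4 * α ^ 2 * X + 1) := log_nonneg (le_add_of_nonneg_left (by positivity))
    rw [hfn, hf.map_zero, Nat.cast_one, log_one]
    positivity
  obtain ⟨m₁, m₂, hm₁, hm₂, hmul, hlog₁, hpred⟩ := hf.exists_apply_eq_mul hfn hY.le
  have hfn_le : 2 * α * log (f n) ≤ 4 * α ^ 2 * X := by
    nlinarith [hf.log_apply_le_two_mul_log n, mul_le_mul_of_nonneg_left hn (sq_nonneg (α : ℝ))]
  have hn_le : 2 * α * log n ≤ 4 * α ^ 2 * X := by
    calc 2 * α * log n ≤ 2 * α * X := by gcongr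
      _ ≤ 4 * α ^ 2 * X := by gcongr <;> nlinarith
  have hpred' : sumPrimeFactorsPred m₂ / K ≤ α * X / (K * log Y) := by
    rw [← div_div, div_right_comm]
    gcongr
    rw [le_div_iff₀ hlogY]
    exact hpred.trans (by gcongr)
  calc log (f (f n))
      ≤ Y * log (2 * α * log (f n) + 1) + 2 * α * log m₁ +
          √(2 * energy α * (sumPrimeFactorsPred m₂ / K)) := by
        rw [hmul]
        exact hf.log_apply_mul_le hα hK (by linarith) hq hm₁ hm₂
    _ ≤ Y * log (2 * α * log (f n) + 1) + 2 * α * (Y * log (2 * α * log n + 1)) +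
          √(2 * energy α * (α * X / (K * log Y))) := by gcongr
    _ ≤ Y * log (4 * α ^ 2 * X + 1) + 2 * α * (Y * log (4 * α ^ 2 * X + 1)) +
          √(2 * energy α * (α * X / (K * log Y))) := by gcongr
    _ = (1 + 2 * α) * Y * log (4 * α ^ 2 * X + 1) +
          √(2 * energy α * (α * X / (K * log Y))) := by ring

end IsMultiplicativeExtension

end IterateUpperBound

section PrimeGrowth

open Real

lemma eventually_mul_log_le (c : ℝ) : ∀ᶠ L : ℝ in atTop, c * log L ≤ L := by
  filter_upwards [(isLittleO_log_id_atTop.const_mul_left c).def one_pos, eventually_ge_atTop 0]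
    with L hlog hL
  simpa [abs_of_nonneg hL] using (le_norm_self _).trans hlog

lemma eventually_mul_pow_le_exp_half (c : ℝ) (k : ℕ) :
    ∀ᶠ L : ℝ in atTop, c * L ^ k ≤ exp (L / 2) := by
  have hlittle := (isLittleO_pow_exp_pos_mul_atTop k (b := 1 / 2) (by norm_num)).const_mul_left c
  filter_upwards [hlittle.def one_pos] with L hL
  simpa [abs_of_pos (exp_pos _), inv_mul_eq_div] using (le_norm_self _).trans hL

lemma eventually_mul_add_le_sq (a b : ℝ) : ∀ᶠ L : ℝ in atTop, a * L + b ≤ L ^ 2 := by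
  filter_upwards [eventually_ge_atTop 1, eventually_ge_atTop (a + |b|)] with L hL1 hL
  nlinarith [le_abs_self b, mul_nonneg (abs_nonneg b) (sub_nonneg.2 hL1)]

/-- The asymptotics `q_j = κ·j·(log j + log log j + O(1))`, with `A` a bound for the error term. -/
def HasPrimeGrowth (q : ℕ → ℕ) (κ A : ℝ) : Prop :=
  ∀ j : ℕ, 2 ≤ j → |(q j : ℝ) - κ * j * (log j + log (log j))| ≤ A * (κ * j)

namespace HasPrimeGrowth

variable {q : ℕ → ℕ} {κ A : ℝ}

lemma le_mul (h : HasPrimeGrowth q κ A) {j : ℕ} (hj : 2 ≤ j) :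
    (q j : ℝ) ≤ κ * j * (log j + log (log j) + A) := by
  linarith [(abs_le.1 (h j hj)).2]

lemma mul_le (h : HasPrimeGrowth q κ A) {j : ℕ} (hj : 2 ≤ j) :
    κ * j * (log j + log (log j) - A) ≤ q j := by
  linarith [(abs_le.1 (h j hj)).1]

lemma eventually_le_mul_sq (h : HasPrimeGrowth q κ A) (hκ : 0 ≤ κ) :
    ∀ᶠ L : ℝ in atTop, ∀ j : ℕ, 1 ≤ j → log j ≤ L → (q j : ℝ) ≤ j * L ^ 2 := by
  filter_upwards [eventually_mul_add_le_sq 0 (q 1), eventually_mul_add_le_sq (2 * κ) (κ * A)]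
    with L hq1 hL j hj hjL
  rcases hj.eq_or_lt with rfl | hj2
  · simpa using hq1
  · have hloglog : log (log j) ≤ log j := log_le_self (log_natCast_nonneg j)
    calc (q j : ℝ) ≤ κ * j * (log j + log (log j) + A) := h.le_mul hj2
      _ ≤ κ * j * (L + L + A) := by gcongr; exact hloglog.trans hjL
      _ = j * (2 * κ * L + κ * A) := by ring
      _ ≤ j * L ^ 2 := by gcongr

lemma eventually_exp_div_pow_lt (h : HasPrimeGrowth q κ A) (hκ : 0 ≤ κ) :
    ∀ᶠ L : ℝ in atTop, ∀ j : ℕ, 1 ≤ j → exp (L / 2) / L ^ 3 < q j → exp (L / 2) / L ^ 5 < j := by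
  filter_upwards [h.eventually_le_mul_sq hκ, eventually_ge_atTop 1] with L hle hL j hj
  contrapose!
  intro hjL
  have hlogj : log j ≤ L := by
    rw [log_le_iff_le_exp (by exact_mod_cast hj)]
    calc (j : ℝ) ≤ exp (L / 2) / L ^ 5 := hjL
      _ ≤ exp (L / 2) := div_le_self (exp_nonneg _) (one_le_pow₀ hL)
      _ ≤ exp L := exp_le_exp.2 (by linarith)
  calc (q j : ℝ) ≤ j * L ^ 2 := hle j hj hlogj
    _ ≤ exp (L / 2) / L ^ 5 * L ^ 2 := by gcongr
    _ = exp (L / 2) / L ^ 3 := by field_simp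

lemma eventually_mul_le_sub_one (h : HasPrimeGrowth q κ A) (hκ : 0 < κ) :
    ∀ᶠ L : ℝ in atTop, ∀ j : ℕ, 1 ≤ j → exp (L / 2) / L ^ 3 < q j →
      κ * (L / 2 - 6 * log L) * j ≤ (q j : ℝ) - 1 := by
  filter_upwards [h.eventually_exp_div_pow_lt hκ.le, eventually_mul_pow_le_exp_half 1 5,
    eventually_mul_log_le 20, eventually_ge_atTop 4,
    tendsto_log_atTop.eventually_ge_atTop (A + 1 / κ)] with L hlt hpow hlog hL4 hA j hj hqj
  have hjL := hlt j hj hqj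
  have hj1 : (1 : ℝ) < j := hjL.trans_le' ((one_le_div (by positivity)).2 (by linarith))
  have hlogj : L / 2 - 5 * log L ≤ log j := by
    have := log_le_log (by positivity) hjL.le
    rwa [log_div (by positivity) (by positivity), log_exp, log_pow] at this
  have hloglog : 0 ≤ log (log j) := log_nonneg (by linarith)
  have hfactor : L / 2 - 6 * log L ≤ log j + log (log j) - A - 1 / κ := by linarith
  calc κ * (L / 2 - 6 * log L) * j
      ≤ κ * (log j + log (log j) - A - 1 / κ) * j := by gcongr κ * ?_ * j
    _ = κ * j * (log j + log (log j) - A) - j := by field_simp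
    _ ≤ (q j : ℝ) - 1 := sub_le_sub (h.mul_le (by exact_mod_cast hj1)) hj1.le

lemma eventually_le_mul (h : HasPrimeGrowth q κ A) (hκ : 0 < κ) :
    ∀ᶠ L : ℝ in atTop, ∀ j : ℕ, 1 ≤ j → (j : ℝ) ≤ exp (L / 2) →
      (q j : ℝ) ≤ κ * (L / 2 + 3 * log L) * j := by
  filter_upwards [eventually_ge_atTop 1, eventually_ge_atTop (2 * (q 1 / κ)),
    tendsto_log_atTop.eventually_ge_atTop A] with L hL hq1 hA j hj hjL
  have hlogL : 0 ≤ log L := log_nonneg hL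
  rcases hj.eq_or_lt with rfl | hj2
  · calc (q 1 : ℝ) = κ * (q 1 / κ) := by field_simp
      _ ≤ κ * (L / 2 + 3 * log L) * (1 : ℕ) := by
        rw [Nat.cast_one, mul_one]
        gcongr
        linarith
  · have hlogj_pos : 0 < log j := log_pos (by exact_mod_cast hj2)
    have hlogj : log j ≤ L / 2 := (log_le_iff_le_exp (by positivity)).2 hjL
    have hloglog : log (log j) ≤ log L := log_le_log hlogj_pos (by linarith)
    have hfactor : log j + log (log j) + A ≤ L / 2 + 3 * log L := by linarith
    calc (q j : ℝ) ≤ κ * j * (log j + log (log j) + A) := h.le_mul hj2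
      _ ≤ κ * j * (L / 2 + 3 * log L) := by gcongr κ * j * ?_
      _ = κ * (L / 2 + 3 * log L) * j := by ring

lemma eventually_log_le (h : HasPrimeGrowth q κ A) (hκ : 0 ≤ κ) :
    ∀ᶠ L : ℝ in atTop, ∀ j : ℕ, 1 ≤ j → (j : ℝ) ≤ L * exp (L / 2) →
      log (q j) ≤ L / 2 + 3 * log L := by
  filter_upwards [h.eventually_le_mul_sq hκ, eventually_ge_atTop 1, eventually_mul_log_le 2]
    with L hle hL hlog j hj hjL
  have hlogj : log j ≤ L := by
    have := log_le_log (by exact_mod_cast hj) hjL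
    rw [log_mul (by positivity) (exp_ne_zero _), log_exp] at this
    linarith
  rcases (q j).eq_zero_or_pos with hqj | hqj
  · have := log_nonneg hL
    rw [hqj, Nat.cast_zero, log_zero]
    positivity
  · calc log (q j) ≤ log (j * L ^ 2) := log_le_log (by exact_mod_cast hqj) (hle j hj hlogj)
      _ ≤ log (L * exp (L / 2) * L ^ 2) := by gcongr
      _ = log (L ^ 3 * exp (L / 2)) := by ring_nf
      _ = L / 2 + 3 * log L := by
        rw [log_mul (by positivity) (exp_ne_zero _), log_exp, log_pow, add_comm]
        norm_num

end HasPrimeGrowth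

end PrimeGrowth

section UpperAsymptotics

open Real

variable {f q : ℕ → ℕ} {α : ℕ} {κ A : ℝ}

lemma sqrt_two_mul_energy_mul (hα : 1 ≤ α) (hκ : 0 < κ) {U l : ℝ} (hU : 0 ≤ U) (hl : 0 < l) :
    √(2 * energy α * (α * U ^ 2 / (κ * l * l))) = leadingCoeff α κ / 2 * (U / l) := by
  have hc := leadingCoeff_pos hα hκ
  have hsq : 2 * energy α * (α * U ^ 2 / (κ * l * l)) = (leadingCoeff α κ / 2 * (U / l)) ^ 2 := by
    rw [mul_pow, div_pow, leadingCoeff_sq hα hκ]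
    field_simp
    ring
  rw [hsq, sqrt_sq (by positivity)]

lemma div_half_sub_log_le {U L : ℝ} (hU : 0 ≤ U) (hL : 1 ≤ L) (hlog : 24 * log L ≤ L) :
    U / (L / 2 - 6 * log L) ≤ 2 * (U / L) * (1 + 24 * (log L / L)) := by
  have hlogL := log_nonneg hL
  have hLpos : 0 < L := by linarith
  rw [div_le_iff₀ (by linarith)]
  have hfactor : 1 ≤ 2 * (1 + 24 * (log L / L)) * ((L / 2 - 6 * log L) / L) := by
    have hexpand : 2 * (1 + 24 * (log L / L)) * ((L / 2 - 6 * log L) / L) =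
        1 + 12 * (log L / L) * (1 - 24 * log L / L) := by field_simp; ring
    have : 24 * log L / L ≤ 1 := (div_le_one hLpos).2 hlog
    have : 0 ≤ log L / L := by positivity
    rw [hexpand]
    nlinarith
  calc U ≤ U * (2 * (1 + 24 * (log L / L)) * ((L / 2 - 6 * log L) / L)) :=
        le_mul_of_one_le_right hU hfactor
    _ = 2 * (U / L) * (1 + 24 * (log L / L)) * (L / 2 - 6 * log L) := by ring

lemma eventually_log_mul_exp_add_one_le (b : ℝ) (hb : 0 ≤ b) :
    ∀ᶠ L : ℝ in atTop, log (b * exp L + 1) ≤ 2 * L := by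
  filter_upwards [tendsto_exp_atTop.eventually_ge_atTop (b + 1), eventually_ge_atTop 0]
    with L hexp hL
  rw [log_le_iff_le_exp (by positivity), two_mul, exp_add]
  nlinarith [one_le_exp hL]

lemma exp_half_sq (L : ℝ) : exp (L / 2) ^ 2 = exp L := by
  rw [← exp_nat_mul]
  ring_nf

namespace IsMultiplicativeExtension

lemma eventually_log_iterate_le_add (hf : IsMultiplicativeExtension f (affine α) (q '' Set.Ici 1))
    (hα : 1 ≤ α) (hκ : 0 < κ) (hq : HasPrimeGrowth q κ A) :
    ∀ᶠ L : ℝ in atTop, ∀ n : ℕ, log n ≤ exp L → log (f (f n)) ≤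
      (1 + 2 * α) * (exp (L / 2) / L ^ 3) * log (4 * α ^ 2 * exp L + 1) +
        leadingCoeff α κ / 2 * (exp (L / 2) / (L / 2 - 6 * log L)) := by
  filter_upwards [hq.eventually_mul_le_sub_one hκ, eventually_mul_log_le 24,
    eventually_mul_pow_le_exp_half 2 3, eventually_ge_atTop 1] with L hgrowth hlog hpow hL n hn
  have hE := energy_pos hα
  have hlogL := log_nonneg hL
  have hL3 : 0 < L ^ 3 := by positivity
  have hl : 0 < L / 2 - 6 * log L := by linarith
  have hY : 1 < exp (L / 2) / L ^ 3 := (one_lt_div hL3).2 (by linarith)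
  have hlogY : L / 2 - 6 * log L ≤ log (exp (L / 2) / L ^ 3) := by
    rw [log_div (exp_ne_zero _) hL3.ne', log_exp, log_pow]
    push_cast
    linarith
  refine (hf.log_iterate_le hα (mul_pos hκ hl) hY hgrowth hn).trans ?_
  rw [← sqrt_two_mul_energy_mul hα hκ (exp_nonneg _) hl, exp_half_sq]
  gcongr

theorem exists_eventually_log_iterate_le
    (hf : IsMultiplicativeExtension f (affine α) (q '' Set.Ici 1))
    (hα : 1 ≤ α) (hκ : 0 < κ) (hq : HasPrimeGrowth q κ A) :
    ∃ C : ℝ, 0 < C ∧ ∀ᶠ L : ℝ in atTop, ∀ n : ℕ, log n ≤ exp L →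
      log (f (f n)) ≤ exp (L / 2) / L * (leadingCoeff α κ + C * (log L / L)) := by
  have hc := leadingCoeff_pos hα hκ
  refine ⟨2 * (1 + 2 * α) + 24 * leadingCoeff α κ, by positivity, ?_⟩
  filter_upwards [hf.eventually_log_iterate_le_add hα hκ hq, eventually_mul_log_le 24,
    eventually_log_mul_exp_add_one_le (4 * α ^ 2) (by positivity), eventually_ge_atTop 1,
    tendsto_log_atTop.eventually_ge_atTop 1] with L hle hlog hlogexp hL hlogL n hn
  have hsmall : (1 + 2 * α) * (exp (L / 2) / L ^ 3) * log (4 * α ^ 2 * exp L + 1) ≤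
      exp (L / 2) / L * (2 * (1 + 2 * α) * (log L / L)) := by
    calc (1 + 2 * α) * (exp (L / 2) / L ^ 3) * log (4 * α ^ 2 * exp L + 1)
        ≤ (1 + 2 * α) * (exp (L / 2) / L ^ 3) * (2 * L) := by gcongr
      _ = exp (L / 2) / L * (2 * (1 + 2 * α) * (1 / L)) := by field_simp
      _ ≤ exp (L / 2) / L * (2 * (1 + 2 * α) * (log L / L)) := by gcongr
  have hmain : leadingCoeff α κ / 2 * (exp (L / 2) / (L / 2 - 6 * log L)) ≤
      exp (L / 2) / L * (leadingCoeff α κ * (1 + 24 * (log L / L))) := by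
    calc leadingCoeff α κ / 2 * (exp (L / 2) / (L / 2 - 6 * log L))
        ≤ leadingCoeff α κ / 2 * (2 * (exp (L / 2) / L) * (1 + 24 * (log L / L))) := by
          gcongr
          exact div_half_sub_log_le (exp_nonneg _) hL hlog
      _ = exp (L / 2) / L * (leadingCoeff α κ * (1 + 24 * (log L / L))) := by ring
  linarith [hle n hn]

end IsMultiplicativeExtension

end UpperAsymptotics

section StaircaseProducts

open Finset Real

/-- `p` is a sequence of distinct primes of `Q`, each of which is a value `p j = g (E j)` of `g`. -/
structure IsPrimeValueSequence (p E g : ℕ → ℕ) (Q : Set ℕ) : Prop where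
  prime : ∀ j, (p j).Prime
  mem : ∀ j, p j ∈ Q
  injective : Function.Injective p
  map_exponent : ∀ j, g (E j) = p j

/-- A product of `N` layers of distinct primes, the layer `a` having length `r a`. When
`p j = g (E j)` the extension `f` of `g` maps it to `∏ p j ^ #{a < N | j < r a}`, an integer whose
exponents form the staircase with steps `r`. -/
def staircaseProduct (p E r : ℕ → ℕ) (N : ℕ) : ℕ :=
  ∏ a ∈ range N, ∏ j ∈ range (r a), p (a * r 0 + j) ^ E j

variable {f g p E r : ℕ → ℕ} {Q : Set ℕ}

lemma injOn_mul_add_of_antitone (hr : Antitone r) (N : ℕ) :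
    Set.InjOn (fun i : (_ : ℕ) × ℕ ↦ i.1 * r 0 + i.2) ((range N).sigma fun a ↦ range (r a)) := by
  rintro ⟨a, j⟩ haj ⟨b, k⟩ hbk h
  simp only [coe_sigma, Set.mem_sigma_iff, mem_coe, mem_range] at haj hbk h
  have hj : j < r 0 := haj.2.trans_le (hr a.zero_le)
  have hk : k < r 0 := hbk.2.trans_le (hr b.zero_le)
  obtain rfl : j = k := by
    simpa [Nat.add_mod, Nat.mod_eq_of_lt hj, Nat.mod_eq_of_lt hk] using congrArg (· % r 0) h
  obtain rfl : a = b := Nat.eq_of_mul_eq_mul_right (by omega) (Nat.add_right_cancel h)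
  rfl

lemma filter_lt_antitone_eq_range (hr : Antitone r) (j N : ℕ) :
    {a ∈ range N | j < r a} = range #{a ∈ range N | j < r a} := by
  induction N with
  | zero => rfl
  | succ N ih =>
    by_cases hN : j < r N
    · have hall : {a ∈ range (N + 1) | j < r a} = range (N + 1) :=
        filter_true_of_mem fun a ha ↦ hN.trans_le (hr (mem_range_succ_iff.1 ha))
      rw [hall, card_range]
    · rwa [range_add_one, filter_insert, if_neg hN]

lemma IsMultiplicativeExtension.apply_staircaseProduct (hf : IsMultiplicativeExtension f g Q)
    (hg0 : g 0 = 1) (hp : IsPrimeValueSequence p E g Q) (hr : Antitone r) (N : ℕ) :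
    f (staircaseProduct p E r N) = ∏ j ∈ range (r 0), p j ^ #{a ∈ range N | j < r a} := by
  calc f (staircaseProduct p E r N)
      = f (∏ i ∈ (range N).sigma fun a ↦ range (r a), p (i.1 * r 0 + i.2) ^ E i.2) := by
        rw [staircaseProduct, prod_sigma]
    _ = ∏ i ∈ (range N).sigma fun a ↦ range (r a), g (E i.2) :=
        hf.apply_prod_prime_pow hg0 (fun _ _ ↦ hp.prime _) (fun _ _ ↦ hp.mem _)
          (hp.injective.comp_injOn (injOn_mul_add_of_antitone hr N)) _
    _ = ∏ a ∈ range N, ∏ j ∈ range (r a), p j := by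
        simp only [hp.map_exponent, prod_sigma]
    _ = ∏ j ∈ range (r 0), ∏ a ∈ range N with j < r a, p j := by
        refine prod_comm' fun a j ↦ ?_
        simp only [mem_range, mem_filter]
        exact ⟨fun h ↦ ⟨h, h.2.trans_le (hr a.zero_le)⟩, And.left⟩
    _ = ∏ j ∈ range (r 0), p j ^ #{a ∈ range N | j < r a} := by simp only [prod_const]

lemma IsMultiplicativeExtension.log_iterate_staircaseProduct
    (hf : IsMultiplicativeExtension f g Q) (hg0 : g 0 = 1) (hg : ∀ a, g a ≠ 0)
    (hp : IsPrimeValueSequence p E g Q) (hr : Antitone r) (N : ℕ) :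
    log (f (f (staircaseProduct p E r N))) = ∑ a ∈ range N, r a * logIncrement g a := by
  rw [hf.apply_staircaseProduct hg0 hp hr, hf.apply_prod_prime_pow hg0 (fun j _ ↦ hp.prime j)
    (fun j _ ↦ hp.mem j) hp.injective.injOn, Nat.cast_prod,
    log_prod fun j _ ↦ by exact_mod_cast hg _]
  calc ∑ j ∈ range (r 0), log (g #{a ∈ range N | j < r a})
      = ∑ j ∈ range (r 0), ∑ a ∈ range N with j < r a, logIncrement g a := by
        refine sum_congr rfl fun j _ ↦ ?_
        rw [← sum_range_logIncrement hg0 hg, ← filter_lt_antitone_eq_range hr]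
    _ = ∑ a ∈ range N, ∑ _ ∈ range (r a), logIncrement g a := by
        refine sum_comm' fun j a ↦ ?_
        simp only [mem_range, mem_filter]
        exact ⟨fun h ↦ ⟨h.2.2, h.2.1⟩, fun h ↦ ⟨h.1.trans_le (hr a.zero_le), h.2, h.1⟩⟩
    _ = ∑ a ∈ range N, r a * logIncrement g a := by
        simp only [sum_const, card_range, nsmul_eq_mul]

lemma staircaseProduct_ne_zero (hp : ∀ j, p j ≠ 0) {N : ℕ} : staircaseProduct p E r N ≠ 0 :=
  prod_ne_zero_iff.2 fun _ _ ↦ prod_ne_zero_iff.2 fun _ _ ↦ pow_ne_zero _ (hp _)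

lemma sum_range_add_one (n : ℕ) : ∑ j ∈ range n, ((j : ℝ) + 1) = n * (n + 1) / 2 := by
  induction n with
  | zero => simp
  | succ n ih => rw [sum_range_succ, ih]; push_cast; ring

lemma log_staircaseProduct_le (hp : ∀ j, p j ≠ 0) (hr : Antitone r) {N : ℕ} {K l : ℝ}
    (hl : 0 ≤ l) (hE : ∀ j < r 0, (E j : ℝ) ≤ K * (j + 1)) (hlog : ∀ i < N * r 0, log (p i) ≤ l) :
    log (staircaseProduct p E r N) ≤ K * l / 2 * ∑ a ∈ range N, (r a : ℝ) * (r a + 1) := by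
  have hne (i e : ℕ) : (p i : ℝ) ^ e ≠ 0 := pow_ne_zero _ (by exact_mod_cast hp i)
  have hterm : ∀ a < N, ∀ j < r a, E j * log (p (a * r 0 + j)) ≤ K * l * (j + 1) := by
    intro a ha j hj
    have hj0 : j < r 0 := hj.trans_le (hr a.zero_le)
    have hindex : a * r 0 + j < N * r 0 :=
      calc a * r 0 + j < (a + 1) * r 0 := by rw [add_one_mul]; omega
        _ ≤ N * r 0 := Nat.mul_le_mul_right _ ha
    calc E j * log (p (a * r 0 + j)) ≤ E j * l := by gcongr; exact hlog _ hindex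
      _ ≤ K * (j + 1) * l := by gcongr; exact hE j hj0
      _ = K * l * (j + 1) := by ring
  calc log (staircaseProduct p E r N)
      = ∑ a ∈ range N, ∑ j ∈ range (r a), E j * log (p (a * r 0 + j)) := by
        simp only [staircaseProduct, Nat.cast_prod, Nat.cast_pow,
          log_prod fun _ _ ↦ prod_ne_zero_iff.2 fun _ _ ↦ hne _ _, log_prod fun _ _ ↦ hne _ _,
          log_pow]
    _ ≤ ∑ a ∈ range N, ∑ j ∈ range (r a), K * l * (j + 1) :=
        sum_le_sum fun a ha ↦ sum_le_sum fun j hj ↦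
          hterm a (mem_range.1 ha) j (mem_range.1 hj)
    _ = K * l / 2 * ∑ a ∈ range N, (r a : ℝ) * (r a + 1) := by
        simp only [← mul_sum, sum_range_add_one, ← sum_div]
        ring

lemma antitone_floor_mul {w : ℕ → ℝ} (hw : Antitone w) {ρ : ℝ} (hρ : 0 ≤ ρ) :
    Antitone fun a ↦ ⌊ρ * w a⌋₊ :=
  fun _ _ hab ↦ Nat.floor_le_floor (mul_le_mul_of_nonneg_left (hw hab) hρ)

lemma sum_floor_mul_floor_add_one_le {w : ℕ → ℝ} (hw0 : ∀ a, 0 ≤ w a) (hw : Antitone w) {ρ : ℝ}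
    (hρ : 0 ≤ ρ) (N : ℕ) :
    ∑ a ∈ range N, (⌊ρ * w a⌋₊ : ℝ) * (⌊ρ * w a⌋₊ + 1) ≤
      ρ ^ 2 * ∑ a ∈ range N, w a ^ 2 + N * (ρ * w 0) := by
  have hterm (a : ℕ) :
      (⌊ρ * w a⌋₊ : ℝ) * (⌊ρ * w a⌋₊ + 1) ≤ ρ ^ 2 * w a ^ 2 + ρ * w 0 := by
    have hpos : 0 ≤ ρ * w a := mul_nonneg hρ (hw0 a)
    have hfloor := Nat.floor_le hpos
    calc (⌊ρ * w a⌋₊ : ℝ) * (⌊ρ * w a⌋₊ + 1) ≤ ρ * w a * (ρ * w a + 1) := by gcongr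
      _ = ρ ^ 2 * w a ^ 2 + ρ * w a := by ring
      _ ≤ ρ ^ 2 * w a ^ 2 + ρ * w 0 := by gcongr; exact hw a.zero_le
  refine (sum_le_sum fun a _ ↦ hterm a).trans_eq ?_
  rw [sum_add_distrib, ← mul_sum, sum_const, card_range, nsmul_eq_mul]

lemma mul_sum_sq_sub_le_sum_floor_mul {w : ℕ → ℝ} (hw0 : ∀ a, 0 ≤ w a) (hw : Antitone w) (ρ : ℝ)
    (N : ℕ) :
    ρ * ∑ a ∈ range N, w a ^ 2 - N * w 0 ≤ ∑ a ∈ range N, ⌊ρ * w a⌋₊ * w a := by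
  have hterm (a : ℕ) : ρ * w a ^ 2 - w 0 ≤ ⌊ρ * w a⌋₊ * w a :=
    calc ρ * w a ^ 2 - w 0 ≤ ρ * w a ^ 2 - w a := by gcongr; exact hw a.zero_le
      _ = (ρ * w a - 1) * w a := by ring
      _ ≤ ⌊ρ * w a⌋₊ * w a := by gcongr; exacts [hw0 a, (Nat.sub_one_lt_floor _).le]
  refine le_trans (le_of_eq ?_) (sum_le_sum fun a _ ↦ hterm a)
  rw [sum_sub_distrib, ← mul_sum, sum_const, card_range, nsmul_eq_mul]

end StaircaseProducts

section LowerAsymptotics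

open Real

variable {f q E : ℕ → ℕ} {Q : Set ℕ} {α : ℕ} {κ A : ℝ}

/-- The scale `ρ` of the staircase with steps `⌊ρ * logIncrement (affine α) a⌋₊` at `L = log log x`.
The first two factors are the maximiser of the gain at cost `exp L`; the last one absorbs the error
terms in the cost. -/
noncomputable def stairScale (α : ℕ) (κ L : ℝ) : ℝ :=
  leadingCoeff α κ / energy α * (exp (L / 2) / L) * (1 - 12 * (log L / L))

lemma IsMultiplicativeExtension.exists_log_iterate_ge
    (hf : IsMultiplicativeExtension f (affine α) Q) (hα : 1 ≤ α)
    (hp : IsPrimeValueSequence (fun j ↦ q (j + 1)) E (affine α) Q) {ρ U l : ℝ} {N : ℕ}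
    (hρ : 0 ≤ ρ) (hκ : 0 ≤ κ) (hl : 0 ≤ l) (hN : N ≠ 0)
    (hρU : ρ * logIncrement (affine α) 0 ≤ U)
    (hq : ∀ j : ℕ, 1 ≤ j → (j : ℝ) ≤ U → (q j : ℝ) ≤ κ * l * j)
    (hlog : ∀ j : ℕ, 1 ≤ j → (j : ℝ) ≤ N * U → log (q j) ≤ l) :
    ∃ n : ℕ, n ≠ 0 ∧
      log n ≤ κ * l ^ 2 / (2 * α) *
        (ρ ^ 2 * energy α + N * (ρ * logIncrement (affine α) 0)) ∧
      ρ * (energy α - (α : ℝ) ^ 2 / N) - N * logIncrement (affine α) 0 ≤ log (f (f n)) := by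
  set w := logIncrement (affine α)
  have hw0 : ∀ a, 0 ≤ w a := logIncrement_nonneg (affine_mono α)
  have hw : Antitone w := logIncrement_affine_antitone α
  set r : ℕ → ℕ := fun a ↦ ⌊ρ * w a⌋₊
  have hr : Antitone r := antitone_floor_mul hw hρ
  have hr0 : (r 0 : ℝ) ≤ U := (Nat.floor_le (mul_nonneg hρ (hw0 0))).trans hρU
  have hE : ∀ j < r 0, (E j : ℝ) ≤ κ * l / α * (j + 1) := by
    intro j hj
    have hjU : ((j + 1 : ℕ) : ℝ) ≤ U := hr0.trans' (by exact_mod_cast hj)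
    have hqj := hq (j + 1) j.succ_pos hjU
    rw [← hp.map_exponent] at hqj
    simpa [div_mul_eq_mul_div] using le_div_of_affine_le hα hqj
  have hlogq : ∀ i < N * r 0, log (q (i + 1)) ≤ l := fun i hi ↦
    hlog (i + 1) i.succ_pos <| calc
      ((i + 1 : ℕ) : ℝ) ≤ N * r 0 := by exact_mod_cast hi
      _ ≤ N * U := by gcongr
  refine ⟨staircaseProduct (fun j ↦ q (j + 1)) E r N, ?_, ?_, ?_⟩
  · exact staircaseProduct_ne_zero fun j ↦ (hp.prime j).ne_zero
  · calc log (staircaseProduct (fun j ↦ q (j + 1)) E r N)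
        ≤ κ * l / α * l / 2 * ∑ a ∈ Finset.range N, (r a : ℝ) * (r a + 1) :=
          log_staircaseProduct_le (fun j ↦ (hp.prime j).ne_zero) hr hl hE hlogq
      _ ≤ κ * l / α * l / 2 * (ρ ^ 2 * energy α + N * (ρ * w 0)) := by
          gcongr
          refine (sum_floor_mul_floor_add_one_le hw0 hw hρ N).trans ?_
          gcongr
          exact sum_range_sq_le_energy hα N
      _ = κ * l ^ 2 / (2 * α) * (ρ ^ 2 * energy α + N * (ρ * w 0)) := by ring
  · rw [hf.log_iterate_staircaseProduct (affine_zero α) (affine_ne_zero α) hp hr]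
    refine le_trans ?_ (mul_sum_sq_sub_le_sum_floor_mul hw0 hw ρ N)
    gcongr
    exact energy_sub_le_sum_range_sq hα hN

lemma stairScale_nonneg (hα : 1 ≤ α) (hκ : 0 < κ) {L : ℝ} (hL : 0 < L) (hlog : 24 * log L ≤ L) :
    0 ≤ stairScale α κ L := by
  have hc := leadingCoeff_pos hα hκ
  have hE := energy_pos hα
  have ht : log L / L ≤ 1 / 24 := (div_le_iff₀ hL).2 (by linarith)
  exact mul_nonneg (by positivity) (by linarith)

lemma stairScale_le (hα : 1 ≤ α) (hκ : 0 < κ) {L : ℝ} (hL : 1 ≤ L) :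
    stairScale α κ L ≤ leadingCoeff α κ / energy α * (exp (L / 2) / L) := by
  have hc := leadingCoeff_pos hα hκ
  have hE := energy_pos hα
  have hlog := log_nonneg hL
  have ht : 0 ≤ log L / L := by positivity
  exact mul_le_of_le_one_right (by positivity) (by linarith)

lemma stairScale_mul_energy (hα : 1 ≤ α) (κ L : ℝ) :
    stairScale α κ L * energy α =
      leadingCoeff α κ * (exp (L / 2) / L) * (1 - 12 * (log L / L)) := by
  have hE := energy_pos hα
  rw [stairScale]
  field_simp

lemma eventually_stairScale_mul_le (hα : 1 ≤ α) (hκ : 0 < κ) (c : ℝ) (hc : 0 ≤ c) :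
    ∀ᶠ L : ℝ in atTop, stairScale α κ L * c ≤ exp (L / 2) / 2 := by
  filter_upwards [eventually_ge_atTop 1,
    eventually_ge_atTop (2 * (leadingCoeff α κ / energy α) * c)] with L hL hLc
  calc stairScale α κ L * c
      ≤ leadingCoeff α κ / energy α * (exp (L / 2) / L) * c := by
        gcongr
        exact stairScale_le hα hκ hL
    _ = 2 * (leadingCoeff α κ / energy α) * c * (exp (L / 2) / L) / 2 := by ring
    _ ≤ L * (exp (L / 2) / L) / 2 := by gcongr
    _ = exp (L / 2) / 2 := by field_simp

lemma eventually_two_mul_mul_le_stairScale_mul (hα : 1 ≤ α) (hκ : 0 < κ) (c : ℝ) :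
    ∀ᶠ L : ℝ in atTop, 2 * L * c ≤ log L / L * (stairScale α κ L * energy α) := by
  have hlead := leadingCoeff_pos hα hκ
  filter_upwards [eventually_mul_pow_le_exp_half (4 * c / leadingCoeff α κ) 3,
    eventually_ge_atTop 1, eventually_mul_log_le 24,
    tendsto_log_atTop.eventually_ge_atTop 1] with L hpow hL hlog hlogL
  have hcube : 4 * c * L ^ 3 ≤ leadingCoeff α κ * exp (L / 2) := by
    rwa [div_mul_eq_mul_div, div_le_iff₀' hlead] at hpow
  have ht : log L / L ≤ 1 / 24 := (div_le_iff₀ (by linarith)).2 (by linarith)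
  rw [stairScale_mul_energy hα]
  calc 2 * L * c = 4 * c * L ^ 3 / (2 * L ^ 2) := by field_simp; ring
    _ ≤ leadingCoeff α κ * exp (L / 2) / (2 * L ^ 2) := by gcongr
    _ = 1 / L * (leadingCoeff α κ * (exp (L / 2) / L) * (1 / 2)) := by field_simp
    _ ≤ log L / L * (leadingCoeff α κ * (exp (L / 2) / L) * (1 - 12 * (log L / L))) := by
        gcongr
        linarith

lemma sq_mul_sq_mul_le_one {t : ℝ} (ht0 : 0 ≤ t) (ht : 12 * t ≤ 1) :
    (1 + 6 * t) ^ 2 * (1 - 12 * t) ^ 2 * (1 + t) ≤ 1 := by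
  have hprod : (1 + 6 * t) * (1 - 12 * t) ≤ 1 - 6 * t := by nlinarith
  have hprod0 : 0 ≤ (1 + 6 * t) * (1 - 12 * t) := mul_nonneg (by linarith) (by linarith)
  calc (1 + 6 * t) ^ 2 * (1 - 12 * t) ^ 2 * (1 + t)
      = ((1 + 6 * t) * (1 - 12 * t)) ^ 2 * (1 + t) := by ring
    _ ≤ (1 - 6 * t) ^ 2 * (1 + t) := by gcongr
    _ ≤ 1 * ((1 - 6 * t) * (1 + 6 * t)) := by
        rw [sq, mul_assoc]
        gcongr <;> nlinarith
    _ ≤ 1 := by nlinarith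

lemma eventually_stairScale_cost_le (hα : 1 ≤ α) (hκ : 0 < κ) (c : ℝ) :
    ∀ᶠ L : ℝ in atTop, κ * (L / 2 + 3 * log L) ^ 2 / (2 * α) *
      (stairScale α κ L ^ 2 * energy α + 2 * L * (stairScale α κ L * c)) ≤ exp L := by
  have hE := energy_pos hα
  filter_upwards [eventually_two_mul_mul_le_stairScale_mul hα hκ c, eventually_ge_atTop 1,
    eventually_mul_log_le 24] with L hsmall hL hlog
  have hρ := stairScale_nonneg hα hκ (by linarith) hlog
  have ht0 : 0 ≤ log L / L := div_nonneg (log_nonneg hL) (by linarith)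
  have ht : 12 * (log L / L) ≤ 1 := by
    rw [← mul_div_assoc, div_le_one (by linarith)]
    linarith [log_nonneg hL]
  have hlinear : 2 * L * (stairScale α κ L * c) ≤
      log L / L * (stairScale α κ L ^ 2 * energy α) :=
    calc 2 * L * (stairScale α κ L * c) = stairScale α κ L * (2 * L * c) := by ring
      _ ≤ stairScale α κ L * (log L / L * (stairScale α κ L * energy α)) := by gcongr
      _ = log L / L * (stairScale α κ L ^ 2 * energy α) := by ring
  calc κ * (L / 2 + 3 * log L) ^ 2 / (2 * α) *
        (stairScale α κ L ^ 2 * energy α + 2 * L * (stairScale α κ L * c))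
      ≤ κ * (L / 2 + 3 * log L) ^ 2 / (2 * α) *
        (stairScale α κ L ^ 2 * energy α + log L / L * (stairScale α κ L ^ 2 * energy α)) := by
        gcongr
    _ = κ * leadingCoeff α κ ^ 2 / (8 * energy α * α) * exp (L / 2) ^ 2 *
        ((1 + 6 * (log L / L)) ^ 2 * (1 - 12 * (log L / L)) ^ 2 * (1 + log L / L)) := by
        rw [stairScale]
        field_simp
        ring
    _ = exp L *
        ((1 + 6 * (log L / L)) ^ 2 * (1 - 12 * (log L / L)) ^ 2 * (1 + log L / L)) := by
        rw [leadingCoeff_sq hα hκ, exp_half_sq]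
        field_simp
    _ ≤ exp L := mul_le_of_le_one_right (exp_nonneg _) (sq_mul_sq_mul_le_one ht0 ht)

lemma exists_eventually_le_stairScale_gain (hα : 1 ≤ α) (hκ : 0 < κ) (c : ℝ) :
    ∃ C : ℝ, 0 < C ∧ ∀ᶠ L : ℝ in atTop,
      exp (L / 2) / L * (leadingCoeff α κ - C * (log L / L)) ≤
        stairScale α κ L * (energy α - (α : ℝ) ^ 2 / L) - 2 * L * c := by
  have hE := energy_pos hα
  have hlead := leadingCoeff_pos hα hκ
  refine ⟨13 * leadingCoeff α κ + leadingCoeff α κ / energy α * α ^ 2, by positivity, ?_⟩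
  filter_upwards [eventually_two_mul_mul_le_stairScale_mul hα hκ c, eventually_ge_atTop 1,
    tendsto_log_atTop.eventually_ge_atTop 1] with L hsmall hL hlogL
  have hscale := stairScale_le hα hκ hL
  have htail : stairScale α κ L * ((α : ℝ) ^ 2 / L) ≤
      exp (L / 2) / L * (leadingCoeff α κ / energy α * α ^ 2 * (log L / L)) :=
    calc stairScale α κ L * ((α : ℝ) ^ 2 / L)
        ≤ leadingCoeff α κ / energy α * (exp (L / 2) / L) * ((α : ℝ) ^ 2 / L) := by gcongr
      _ = exp (L / 2) / L * (leadingCoeff α κ / energy α * α ^ 2 * (1 / L)) := by ring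
      _ ≤ exp (L / 2) / L * (leadingCoeff α κ / energy α * α ^ 2 * (log L / L)) := by gcongr
  have hrounding : 2 * L * c ≤ exp (L / 2) / L * (leadingCoeff α κ * (log L / L)) :=
    calc 2 * L * c ≤ log L / L * (stairScale α κ L * energy α) := hsmall
      _ ≤ log L / L * (leadingCoeff α κ / energy α * (exp (L / 2) / L) * energy α) := by gcongr
      _ = exp (L / 2) / L * (leadingCoeff α κ * (log L / L)) := by field_simp
  linarith [stairScale_mul_energy hα κ L]

theorem IsMultiplicativeExtension.exists_eventually_exists_le_log_iterate
    (hf : IsMultiplicativeExtension f (affine α) Q) (hα : 1 ≤ α) (hκ : 0 < κ)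
    (hp : IsPrimeValueSequence (fun j ↦ q (j + 1)) E (affine α) Q)
    (hq : HasPrimeGrowth q κ A) :
    ∃ C : ℝ, 0 < C ∧ ∀ᶠ L : ℝ in atTop, ∃ n : ℕ, n ≠ 0 ∧ log n ≤ exp L ∧
      exp (L / 2) / L * (leadingCoeff α κ - C * (log L / L)) ≤ log (f (f n)) := by
  set w₀ := logIncrement (affine α) 0
  have hw₀ : 0 ≤ w₀ := (logIncrement_affine_zero_pos hα).le
  obtain ⟨C, hC, hgain⟩ := exists_eventually_le_stairScale_gain hα hκ w₀
  refine ⟨C, hC, ?_⟩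
  filter_upwards [hgain, eventually_stairScale_cost_le hα hκ w₀,
    eventually_stairScale_mul_le hα hκ w₀ hw₀, hq.eventually_le_mul hκ,
    hq.eventually_log_le hκ.le, eventually_ge_atTop 1, eventually_mul_log_le 24]
    with L hgain hcost hρU hqle hlogq hL hlog
  have hlogL := log_nonneg hL
  have hρ := stairScale_nonneg hα hκ (by linarith) hlog
  have hNle : (⌈L⌉₊ : ℝ) ≤ 2 * L := by linarith [Nat.ceil_lt_add_one (by linarith : 0 ≤ L)]
  obtain ⟨n, hn, hncost, hngain⟩ := hf.exists_log_iterate_ge hα hp (N := ⌈L⌉₊)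
    (l := L / 2 + 3 * log L) hρ hκ.le (by positivity) (Nat.ceil_pos.2 (by linarith)).ne' hρU
    (fun j hj hjU ↦ hqle j hj (by linarith [exp_pos (L / 2)]))
    (fun j hj hjU ↦ hlogq j hj (hjU.trans (by nlinarith [exp_pos (L / 2)])))
  refine ⟨n, hn, hncost.trans (hcost.trans' ?_), hngain.trans' (hgain.trans ?_)⟩
  · gcongr
  · gcongr
    exact Nat.le_ceil L

end LowerAsymptotics

section MaximalOrder

open Real

lemma biSup_mem_Icc {ι : Type*} {s : Finset ι} {F : ι → ℝ} {a b : ℝ} (hb : 0 ≤ b)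
    (hle : ∀ i ∈ s, F i ≤ b) (hge : ∃ i ∈ s, a ≤ F i) : ⨆ i ∈ s, F i ∈ Set.Icc a b := by
  have hinner (i : ι) : ⨆ _ : i ∈ s, F i ≤ b := Real.iSup_le (hle i) hb
  refine ⟨?_, Real.iSup_le hinner hb⟩
  obtain ⟨i, hi, hai⟩ := hge
  calc a ≤ F i := hai
    _ = ⨆ _ : i ∈ s, F i := (ciSup_pos (f := fun _ ↦ F i) hi).symm
    _ ≤ ⨆ i ∈ s, F i := le_ciSup (f := fun i ↦ ⨆ _ : i ∈ s, F i)
        ⟨b, Set.forall_mem_range.2 hinner⟩ i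

lemma tendsto_log_log_natCast_atTop : Tendsto (fun x : ℕ ↦ log (log x)) atTop atTop :=
  tendsto_log_atTop.comp (tendsto_log_atTop.comp tendsto_natCast_atTop_atTop)

lemma eventually_abs_biSup_sub_le {F : ℕ → ℝ} {c C₁ C₂ : ℝ} (hc : 0 ≤ c) (hC₁ : 0 ≤ C₁)
    (hC₂ : 0 ≤ C₂)
    (hupper : ∀ᶠ L : ℝ in atTop, ∀ n : ℕ, log n ≤ exp L →
      F n ≤ exp (L / 2) / L * (c + C₁ * (log L / L)))
    (hlower : ∀ᶠ L : ℝ in atTop, ∃ n : ℕ, n ≠ 0 ∧ log n ≤ exp L ∧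
      exp (L / 2) / L * (c - C₂ * (log L / L)) ≤ F n) :
    ∀ᶠ x : ℕ in atTop, |(⨆ n ∈ Finset.Icc 1 x, F n) - √(log x) / log (log x) * c| ≤
      (C₁ + C₂) * (√(log x) / log (log x)) * (log (log (log x)) / log (log x)) := by
  filter_upwards [tendsto_log_log_natCast_atTop.eventually hupper,
    tendsto_log_log_natCast_atTop.eventually hlower,
    tendsto_log_log_natCast_atTop.eventually_ge_atTop 1, eventually_ge_atTop 2]
    with x hupper hlower hL hx
  have hlogx : 0 < log x := log_pos (by exact_mod_cast hx)
  rw [exp_half, exp_log hlogx] at hupper hlower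
  have hscale : 0 ≤ √(log x) / log (log x) := by positivity
  have herror : 0 ≤ log (log (log x)) / log (log x) :=
    div_nonneg (log_nonneg hL) (by linarith)
  obtain ⟨n, hn, hnx, hnF⟩ := hlower
  have hn_mem : n ∈ Finset.Icc 1 x := by
    rw [log_le_log_iff (by positivity) (by positivity)] at hnx
    exact Finset.mem_Icc.2 ⟨Nat.one_le_iff_ne_zero.2 hn, by exact_mod_cast hnx⟩
  have hle : ∀ m ∈ Finset.Icc 1 x, F m ≤
      √(log x) / log (log x) * (c + C₁ * (log (log (log x)) / log (log x))) := fun m hm ↦ by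
    obtain ⟨hm1, hmx⟩ := Finset.mem_Icc.1 hm
    exact hupper m (log_le_log (by exact_mod_cast hm1) (by exact_mod_cast hmx))
  obtain ⟨hge, hle⟩ := biSup_mem_Icc (by positivity) hle ⟨n, hn_mem, hnF⟩
  have hslack₁ := mul_nonneg hC₁ (mul_nonneg hscale herror)
  have hslack₂ := mul_nonneg hC₂ (mul_nonneg hscale herror)
  rw [abs_le]
  constructor <;> linarith

lemma exists_isPrimeValueSequence {q g : ℕ → ℕ} (hqprime : ∀ j, 1 ≤ j → (q j).Prime)
    (hqmono : ∀ j, 1 ≤ j → q j < q (j + 1))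
    (hgrange : ∀ m : ℕ, 0 < m → (∀ p : ℕ, p.Prime → p ∣ m → ∃ j, 1 ≤ j ∧ q j = p) →
      ∃ x : ℕ, g x = m) :
    ∃ E, IsPrimeValueSequence (fun j ↦ q (j + 1)) E g (q '' Set.Ici 1) := by
  have hprime (j : ℕ) : (q (j + 1)).Prime := hqprime (j + 1) j.succ_pos
  have hvalue (j : ℕ) : ∃ e, g e = q (j + 1) :=
    hgrange _ (hprime j).pos fun p hp hdvd ↦
      ⟨j + 1, j.succ_pos, ((Nat.prime_dvd_prime_iff_eq hp (hprime j)).1 hdvd).symm⟩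
  choose E hE using hvalue
  exact ⟨E, hprime, fun j ↦ ⟨j + 1, j.succ_pos, rfl⟩,
    (strictMono_nat_of_lt_succ fun j ↦ hqmono (j + 1) j.succ_pos).injective, hE⟩

end MaximalOrder

/-- **Maximal order of the iterated function `f`.**
Under the standing hypotheses, with `g(ν) = α·ν + 1` for some `α ∈ ℕ`, one has
`M(x) = (√(log x)/log₂ x)·(C_g/√(κ/α) + O(log₃ x/log₂ x))` as `x → ∞`, where
`M(x) = max_{n ≤ x} log f(f(n))` and `C_g = (8·∑_{j≥1} (log(g(j)/g(j−1)))²)^{1/2}`. -/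
theorem maxOrder_iterated
    (q : ℕ → ℕ) (g f gdag : ℕ → ℕ) (κ cstar cf cdag ε : ℝ) (α : ℕ)
    (hα : 1 ≤ α)
    -- `g(ν) = α·ν + 1`
    (hgα : ∀ ν : ℕ, g ν = α * ν + 1)
    -- the strictly increasing sequence of primes `q_1 < q_2 < …` with its asymptotics (A.1)
    (hqprime : ∀ j : ℕ, 1 ≤ j → (q j).Prime)
    (hqmono : ∀ j : ℕ, 1 ≤ j → q j < q (j + 1))
    (hκ : 0 < κ)
    (hqasymp : ∃ A : ℝ, ∀ j : ℕ, 2 ≤ j →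
      |(q j : ℝ) - κ * j * (Real.log j + Real.log (Real.log j))| ≤ A * (κ * j))
    -- `g` is monotonically increasing with `g(0) = 1` (A.2)
    (hg0 : g 0 = 1) (hgmono : Monotone g)
    -- the image of `g` contains the monoid `⟨Q⟩` generated by `Q = {q_j : j ≥ 1}` (A.3)
    (hgrange : ∀ m : ℕ, 0 < m → (∀ p : ℕ, p.Prime → p ∣ m → ∃ j, 1 ≤ j ∧ q j = p) →
      ∃ x : ℕ, g x = m)
    -- `gdag` is the pseudo-inverse `g†`
    (hgdagdef : ∀ y : ℕ, gdag y = sInf {x : ℕ | 0 < x ∧ g x = y})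
    -- the superadditivity assumption (A.4)
    (hcstar : 1 / (q 1 : ℝ) < cstar)
    (hsuper : ∀ a b : ℕ,
      (∀ p : ℕ, p.Prime → p ∣ a → ∃ j, 1 ≤ j ∧ q j = p) →
      (∀ p : ℕ, p.Prime → p ∣ b → ∃ j, 1 ≤ j ∧ q j = p) →
      q 1 ≤ a → a ≤ b →
      (gdag b : ℝ) + cstar * b * gdag a ≤ gdag (a * b))
    -- the growth assumption `g(i)/g(i−1) = 1 + O(i^{−1/2−ε})` (A.5)
    (hε : 0 < ε)
    (hgratio : ∃ B : ℝ, ∀ i : ℕ, 1 ≤ i →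
      |(g i : ℝ) / (g (i - 1) : ℝ) - 1| ≤ B * (i : ℝ) ^ (-(1 / 2 : ℝ) - ε))
    -- the sublinearity assumption `g(x) ≤ c_f·x` (A.6)
    (hcf : 0 < cf)
    (hgsub : ∀ x : ℕ, 1 ≤ x → (g x : ℝ) ≤ cf * x)
    -- the assumption `g†(q) = c_†·q + O(q/log q)` for `q ∈ Q` (A.7)
    (hcdag : 0 < cdag)
    (hgdagasymp : ∃ B : ℝ, ∀ j : ℕ, 1 ≤ j →
      |(gdag (q j) : ℝ) - cdag * q j| ≤ B * (q j : ℝ) / Real.log (q j))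
    -- `f` is multiplicative with `f(p^ν) = g(ν)` for `p ∈ Q`, `f(p^ν) ∈ {0,1}` otherwise
    (hf0 : f 0 = 1) (hf1 : f 1 = 1)
    (hfmult : ∀ m₁ m₂ : ℕ, Nat.Coprime m₁ m₂ → f (m₁ * m₂) = f m₁ * f m₂)
    (hfQ : ∀ p ν : ℕ, p.Prime → (∃ j, 1 ≤ j ∧ q j = p) → 1 ≤ ν → f (p ^ ν) = g ν)
    (hfnotQ : ∀ p ν : ℕ, p.Prime → ¬(∃ j, 1 ≤ j ∧ q j = p) → 1 ≤ ν →
      f (p ^ ν) = 0 ∨ f (p ^ ν) = 1) :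
    ∃ C : ℝ, 0 < C ∧ ∀ᶠ x : ℕ in atTop,
      |(⨆ n ∈ Finset.Icc 1 x, Real.log (f (f n))) -
          Real.sqrt (Real.log x) / Real.log (Real.log x) *
            (Real.sqrt (8 * ∑' j : ℕ, (Real.log ((g (j + 1) : ℝ) / (g j : ℝ))) ^ 2) /
              Real.sqrt (κ / α))| ≤
        C * (Real.sqrt (Real.log x) / Real.log (Real.log x)) *
          (Real.log (Real.log (Real.log x)) / Real.log (Real.log x)) := by
  obtain rfl : g = affine α := funext hgα
  obtain ⟨A, hq⟩ : ∃ A, HasPrimeGrowth q κ A := hqasymp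
  obtain ⟨E, hp⟩ := exists_isPrimeValueSequence hqprime hqmono hgrange
  have hf : IsMultiplicativeExtension f (affine α) (q '' Set.Ici 1) :=
    ⟨hf0, hf1, hfmult, hfQ, hfnotQ⟩
  obtain ⟨C₁, hC₁, hupper⟩ := hf.exists_eventually_log_iterate_le hα hκ hq
  obtain ⟨C₂, hC₂, hlower⟩ := hf.exists_eventually_exists_le_log_iterate hα hκ hp hq
  exact ⟨C₁ + C₂, add_pos hC₁ hC₂,
    eventually_abs_biSup_sub_le (leadingCoeff_pos hα hκ).le hC₁.le hC₂.le hupper hlower⟩
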